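/- For every normal logic program P and X ∈ {E,A}, τ_EB(P) ≡ˣ_og τ_EH(P); and for every disjunctive logic program P, τ^∨_HP(P) ≡ˣ_og τ^∨_EB(P). -/

import Mathlib

set_option autoImplicit false

/-! # First-order autoepistemic logic (FO-AEL): syntax -/

structure Sig : Type 1 where
  Func : Type
  Pred : Type
  arF : Func → ℕ
  arP : Pred → ℕ

inductive Term (S : Sig) : Type
  | var : ℕ → Term S
  | func : (f : S.Func) → (Fin (S.arF f) → Term S) → Term S

inductive Formula (S : Sig) : Type
  | atom : (p : S.Pred) → (Fin (S.arP p) → Term S) → Formula S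
  | eq : Term S → Term S → Formula S
  | not : Formula S → Formula S
  | and : Formula S → Formula S → Formula S
  | ex : ℕ → Formula S → Formula S
  | box : Formula S → Formula S

namespace Term

variable {S : Sig}

/-- A term is ground if it contains no variables; ground terms are the *names*. -/
def isGround : Term S → Prop
  | var _ => False
  | func _ ts => ∀ i, (ts i).isGround

def hasVar (x : ℕ) : Term S → Prop
  | var y => y = x
  | func _ ts => ∃ i, (ts i).hasVar x

/-- Application of a partial (name) substitution to a term. -/
def subst (β : ℕ → Option (Term S)) : Term S → Term S
  | var x => (β x).getD (var x)
  | func f ts => func f (fun i => (ts i).subst β)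

/-- The function symbols occurring in a term. -/
def funcs : Term S → Set S.Func
  | var _ => ∅
  | func f ts => insert f (⋃ i, (ts i).funcs)

/-- `t` is a name (ground term) over the set `F` of function symbols. -/
def isNameOf (F : Set S.Func) : Term S → Prop
  | var _ => False
  | func f ts => f ∈ F ∧ ∀ i, (ts i).isNameOf F

end Term

namespace Formula

variable {S : Sig}

/-- A formula is objective if it is 𝖫-free. -/
def isObjective : Formula S → Prop
  | atom _ _ => True
  | eq _ _ => True
  | not φ => φ.isObjective
  | and φ ψ => φ.isObjective ∧ ψ.isObjective
  | ex _ φ => φ.isObjective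
  | box _ => False

def isGround : Formula S → Prop
  | atom _ ts => ∀ i, (ts i).isGround
  | eq t₁ t₂ => t₁.isGround ∧ t₂.isGround
  | not φ => φ.isGround
  | and φ ψ => φ.isGround ∧ ψ.isGround
  | ex _ _ => False
  | box φ => φ.isGround

def isAtomic : Formula S → Prop
  | atom _ _ => True
  | eq _ _ => True
  | not _ => False
  | and _ _ => False
  | ex _ _ => False
  | box _ => False

/-- The modal operator 𝖫 occurs only applied to (objective) atomic formulas. -/
def boxAtomic : Formula S → Prop
  | atom _ _ => True
  | eq _ _ => True
  | not φ => φ.boxAtomic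
  | and φ ψ => φ.boxAtomic ∧ ψ.boxAtomic
  | ex _ φ => φ.boxAtomic
  | box φ => φ.isAtomic

/-- Propositional formulas: built from 0-ary predicates only. -/
def isPropositional : Formula S → Prop
  | atom p _ => S.arP p = 0
  | eq _ _ => False
  | not φ => φ.isPropositional
  | and φ ψ => φ.isPropositional ∧ ψ.isPropositional
  | ex _ _ => False
  | box _ => False

def freeIn (x : ℕ) : Formula S → Prop
  | atom _ ts => ∃ i, (ts i).hasVar x
  | eq t₁ t₂ => t₁.hasVar x ∨ t₂.hasVar x
  | not φ => φ.freeIn x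
  | and φ ψ => φ.freeIn x ∨ ψ.freeIn x
  | ex y φ => x ≠ y ∧ φ.freeIn x
  | box φ => φ.freeIn x

/-- A formula is closed (a sentence) if it has no free variables. -/
def closed (φ : Formula S) : Prop := ∀ x, ¬ φ.freeIn x

/-- Capture-avoiding application of a partial name substitution (values are ground). -/
def subst (β : ℕ → Option (Term S)) : Formula S → Formula S
  | atom p ts => atom p (fun i => (ts i).subst β)
  | eq t₁ t₂ => eq (t₁.subst β) (t₂.subst β)
  | not φ => not (φ.subst β)
  | and φ ψ => and (φ.subst β) (ψ.subst β)
  | ex y φ => ex y (φ.subst (fun z => if z = y then none else β z))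
  | box φ => box (φ.subst β)

def funcs : Formula S → Set S.Func
  | atom _ ts => ⋃ i, (ts i).funcs
  | eq t₁ t₂ => t₁.funcs ∪ t₂.funcs
  | not φ => φ.funcs
  | and φ ψ => φ.funcs ∪ ψ.funcs
  | ex _ φ => φ.funcs
  | box φ => φ.funcs

def preds : Formula S → Set S.Pred
  | atom p _ => {p}
  | eq _ _ => ∅
  | not φ => φ.preds
  | and φ ψ => φ.preds ∪ ψ.preds
  | ex _ φ => φ.preds
  | box φ => φ.preds

/-- `φ ∨ ψ` as an abbreviation: `¬(¬φ ∧ ¬ψ)`. -/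
def or (φ ψ : Formula S) : Formula S := not (and (not φ) (not ψ))

/-- `φ ⊃ ψ` as an abbreviation: `¬(φ ∧ ¬ψ)`. -/
def imp (φ ψ : Formula S) : Formula S := not (and φ (not ψ))

/-- `∀x.φ` as an abbreviation: `¬∃x.¬φ`. -/
def all (x : ℕ) (φ : Formula S) : Formula S := not (ex x (not φ))

end Formula

/-! ## Semantics -/

structure Interp (S : Sig) where
  U : Type
  nonempty : Nonempty U
  interpF : (f : S.Func) → (Fin (S.arF f) → U) → U
  interpP : (p : S.Pred) → (Fin (S.arP p) → U) → Prop

noncomputable def Interp.dflt {S : Sig} (w : Interp S) : w.U := Classical.choice w.nonempty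

def Term.eval {S : Sig} (w : Interp S) (B : ℕ → w.U) : Term S → w.U
  | Term.var x => B x
  | Term.func f ts => w.interpF f (fun i => (ts i).eval w B)

/-- Evaluation of a ground term (the assignment is irrelevant). -/
noncomputable def Term.evalG {S : Sig} (w : Interp S) (t : Term S) : w.U :=
  t.eval w (fun _ => w.dflt)

/-- An individual is named if some name (ground term) denotes it. -/
def IsNamed {S : Sig} (w : Interp S) (k : w.U) : Prop :=
  ∃ t : Term S, t.isGround ∧ Term.evalG w t = k

/-- A name substitution `β` is associated with the variable assignment `B`:
its domain is exactly the set of variables whose `B`-value is named, and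
it assigns to each such variable a name denoting its `B`-value. -/
def Assoc {S : Sig} (w : Interp S) (B : ℕ → w.U) (β : ℕ → Option (Term S)) : Prop :=
  ∀ x : ℕ,
    (IsNamed w (B x) → (β x).isSome) ∧
    (∀ t : Term S, β x = some t → t.isGround ∧ Term.evalG w t = B x)

/-- The two semantics: any-name (E) and all-name (A). -/
inductive Sem : Type
  | any
  | all

/-- Satisfaction of a formula in an autoepistemic interpretation `⟨w,Γ⟩`
under a variable assignment, for the any-name (E) resp. all-name (A) semantics. -/
def Sat {S : Sig} (X : Sem) (w : Interp S) (Γ : Set (Formula S)) :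
    Formula S → (ℕ → w.U) → Prop
  | Formula.atom p ts, B => w.interpP p (fun i => (ts i).eval w B)
  | Formula.eq t₁ t₂, B => t₁.eval w B = t₂.eval w B
  | Formula.not φ, B => ¬ Sat X w Γ φ B
  | Formula.and φ ψ, B => Sat X w Γ φ B ∧ Sat X w Γ ψ B
  | Formula.ex x φ, B => ∃ u : w.U, Sat X w Γ φ (Function.update B x u)
  | Formula.box φ, B =>
      match X with
      | Sem.any => ∃ β, Assoc w B β ∧ (φ.subst β).closed ∧ φ.subst β ∈ Γ
      | Sem.all => ∀ β, Assoc w B β → (φ.subst β).closed ∧ φ.subst β ∈ Γ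

def ModelsF {S : Sig} (X : Sem) (w : Interp S) (Γ : Set (Formula S)) (φ : Formula S) : Prop :=
  ∀ B : ℕ → w.U, Sat X w Γ φ B

def ModelsT {S : Sig} (X : Sem) (w : Interp S) (Γ Φ : Set (Formula S)) : Prop :=
  ∀ φ ∈ Φ, ModelsF X w Γ φ

/-- `Φ ⊨ˣ_Γ φ`. -/
def Entails {S : Sig} (X : Sem) (Φ Γ : Set (Formula S)) (φ : Formula S) : Prop :=
  ∀ w : Interp S, ModelsT X w Γ Φ → ModelsF X w Γ φ

/-- The standard names assumption: all names are interpreted distinctly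
and every individual is named. -/
def SNA {S : Sig} (w : Interp S) : Prop :=
  (∀ t₁ t₂ : Term S, t₁.isGround → t₂.isGround → Term.evalG w t₁ = Term.evalG w t₂ → t₁ = t₂) ∧
  (∀ k : w.U, IsNamed w k)

/-- Entailment restricted to interpretations satisfying the standard names assumption. -/
def EntailsSN {S : Sig} (X : Sem) (Φ Γ : Set (Formula S)) (φ : Formula S) : Prop :=
  ∀ w : Interp S, SNA w → ModelsT X w Γ Φ → ModelsF X w Γ φ

/-- `T` is a stableˣ expansion of `Φ`. -/
def StableExp {S : Sig} (X : Sem) (Φ T : Set (Formula S)) : Prop :=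
  T = {φ | Entails X Φ T φ}

def objOf {S : Sig} (T : Set (Formula S)) : Set (Formula S) :=
  {φ ∈ T | φ.isObjective}

def ogOf {S : Sig} (T : Set (Formula S)) : Set (Formula S) :=
  {φ ∈ T | φ.isObjective ∧ φ.isGround}

def ogaOf {S : Sig} (T : Set (Formula S)) : Set (Formula S) :=
  {φ ∈ T | φ.isObjective ∧ φ.isGround ∧ φ.isAtomic}

def Consistent {S : Sig} (T : Set (Formula S)) : Prop := T ≠ Set.univ

/-- `Φ₁ ≡ˣ Φ₂`: same stableˣ expansions. -/
def ExpEquiv {S : Sig} (X : Sem) (Φ₁ Φ₂ : Set (Formula S)) : Prop :=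
  ∀ T, StableExp X Φ₁ T ↔ StableExp X Φ₂ T

/-- `Φ₁ ≡ˣ_γ Φ₂` for a selector `sel` (e.g. `ogaOf`): the stableˣ expansions
correspond with respect to `sel`. -/
def ExpEquivSel {S : Sig} (X : Sem) (sel : Set (Formula S) → Set (Formula S))
    (Φ₁ Φ₂ : Set (Formula S)) : Prop :=
  (∀ T, StableExp X Φ₁ T → ∃ T', StableExp X Φ₂ T' ∧ sel T = sel T') ∧
  (∀ T', StableExp X Φ₂ T' → ∃ T, StableExp X Φ₁ T ∧ sel T = sel T')

/-- Autoepistemicˣ consequences of `Φ`. -/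
def Cn {S : Sig} (X : Sem) (Φ : Set (Formula S)) : Set (Formula S) :=
  {φ | ∀ T, StableExp X Φ T → φ ∈ T}

def CnO {S : Sig} (X : Sem) (Φ : Set (Formula S)) : Set (Formula S) :=
  {φ ∈ Cn X Φ | φ.isObjective}

def CnOg {S : Sig} (X : Sem) (Φ : Set (Formula S)) : Set (Formula S) :=
  {φ ∈ Cn X Φ | φ.isObjective ∧ φ.isGround}

/-! ## Logic programs -/

structure PAtom (S : Sig) where
  p : S.Pred
  args : Fin (S.arP p) → Term S

namespace PAtom

variable {S : Sig}

def toFormula (a : PAtom S) : Formula S := Formula.atom a.p a.args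

def isGround (a : PAtom S) : Prop := ∀ i, (a.args i).isGround

def hasVar (x : ℕ) (a : PAtom S) : Prop := ∃ i, (a.args i).hasVar x

def substA (σ : ℕ → Term S) (a : PAtom S) : PAtom S :=
  ⟨a.p, fun i => (a.args i).subst (fun x => some (σ x))⟩

def funcs (a : PAtom S) : Set S.Func := ⋃ i, (a.args i).funcs

end PAtom

/-- A (disjunctive) rule `h₁ | … | h_l ← b₁,…,b_m, not c₁,…,not c_n`,
together with a list of the variables occurring in it. -/
structure Rule (S : Sig) where
  head : List (PAtom S)
  pos : List (PAtom S)
  neg : List (PAtom S)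
  vars : List ℕ

namespace Rule

variable {S : Sig}

def atoms (r : Rule S) : List (PAtom S) := r.head ++ r.pos ++ r.neg

def hasVar (x : ℕ) (r : Rule S) : Prop := ∃ a ∈ r.atoms, PAtom.hasVar x a

/-- Well-formedness: at least one head atom, and `vars` lists all variables of the rule. -/
def wf (r : Rule S) : Prop := r.head ≠ [] ∧ ∀ x, r.hasVar x → x ∈ r.vars

def isNormal (r : Rule S) : Prop := r.head.length = 1

def isGround (r : Rule S) : Prop := (∀ a ∈ r.atoms, a.isGround) ∧ r.vars = []

def isSafe (r : Rule S) : Prop := ∀ x, r.hasVar x → ∃ a ∈ r.pos, PAtom.hasVar x a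

def isPositive (r : Rule S) : Prop := r.neg = []

def applySubst (σ : ℕ → Term S) (r : Rule S) : Rule S :=
  ⟨r.head.map (PAtom.substA σ), r.pos.map (PAtom.substA σ), r.neg.map (PAtom.substA σ), []⟩

end Rule

abbrev Program (S : Sig) := Set (Rule S)

def progWf {S : Sig} (P : Program S) : Prop := ∀ r ∈ P, r.wf
def progNormal {S : Sig} (P : Program S) : Prop := ∀ r ∈ P, r.isNormal
def progGround {S : Sig} (P : Program S) : Prop := ∀ r ∈ P, r.isGround
def progSafe {S : Sig} (P : Program S) : Prop := ∀ r ∈ P, r.isSafe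
def progPositive {S : Sig} (P : Program S) : Prop := ∀ r ∈ P, r.isPositive

/-- The function symbols occurring in `P` (part of the signature `Σ_P`). -/
def progFuncs {S : Sig} (P : Program S) : Set S.Func :=
  {f | ∃ r ∈ P, ∃ a ∈ r.atoms, f ∈ a.funcs}

/-- The predicate symbols occurring in `P` (part of the signature `Σ_P`). -/
def progPreds {S : Sig} (P : Program S) : Set S.Pred :=
  {q | ∃ r ∈ P, ∃ a ∈ r.atoms, a.p = q}

/-- The ambient signature is exactly the signature `Σ_P` of `P`. -/
def fullSig {S : Sig} (P : Program S) : Prop :=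
  (∀ f : S.Func, f ∈ progFuncs P) ∧ (∀ q : S.Pred, q ∈ progPreds P)

/-- Standing assumption: `Σ_P` contains a 0-ary function symbol whenever it
has a predicate symbol of arity greater than 0. -/
def goodSig {S : Sig} (P : Program S) : Prop :=
  (∃ q ∈ progPreds P, 0 < S.arP q) → ∃ f ∈ progFuncs P, S.arF f = 0

/-! ## Embeddings of logic programs into FO-AEL -/

def andAll {S : Sig} : Formula S → List (Formula S) → Formula S
  | φ, [] => φ
  | φ, ψ :: rest => andAll (Formula.and φ ψ) rest

def orAll {S : Sig} : Formula S → List (Formula S) → Formula S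
  | φ, [] => φ
  | φ, ψ :: rest => orAll (Formula.or φ ψ) rest

/-- `impOf ants c` is `⋀ ants ⊃ c` (just `c` if there are no antecedents). -/
def impOf {S : Sig} : List (Formula S) → Formula S → Formula S
  | [], c => c
  | a :: rest, c => Formula.imp (andAll a rest) c

/-- Disjunction of a nonempty list (junk value on the empty list,
which is excluded by rule well-formedness). -/
def disjOf {S : Sig} : List (Formula S) → Formula S
  | [] => Formula.eq (Term.var 0) (Term.var 0)
  | h :: rest => orAll h rest

/-- Universal uclosure over the listed variables. -/
def uclosure {S : Sig} (vs : List ℕ) (φ : Formula S) : Formula S :=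
  vs.foldr Formula.all φ

def bodyHP {S : Sig} (r : Rule S) : List (Formula S) :=
  r.pos.map PAtom.toFormula ++ r.neg.map (fun c => Formula.not (Formula.box c.toFormula))

def bodyE {S : Sig} (r : Rule S) : List (Formula S) :=
  r.pos.map (fun b => Formula.and b.toFormula (Formula.box b.toFormula)) ++
    r.neg.map (fun c => Formula.not (Formula.box c.toFormula))

/-- `τ_HP(r)` resp. `τ^∨_HP(r)`. -/
def embHP {S : Sig} (r : Rule S) : Formula S :=
  uclosure r.vars (impOf (bodyHP r) (disjOf (r.head.map PAtom.toFormula)))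

/-- `τ_EB(r)` resp. `τ^∨_EB(r)`. -/
def embEB {S : Sig} (r : Rule S) : Formula S :=
  uclosure r.vars (impOf (bodyE r) (disjOf (r.head.map PAtom.toFormula)))

/-- `τ_EH(r)` resp. `τ^∨_EH(r)`. -/
def embEH {S : Sig} (r : Rule S) : Formula S :=
  uclosure r.vars (impOf (bodyE r)
    (disjOf (r.head.map (fun h => Formula.and h.toFormula (Formula.box h.toFormula)))))

/-- The unique-names axioms `¬𝖫(t₁=t₂) ⊃ t₁≠t₂` for distinct names of `Σ_P`. -/
def UNAax {S : Sig} (P : Program S) : Set (Formula S) :=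
  {φ | ∃ t₁ t₂ : Term S, t₁.isNameOf (progFuncs P) ∧ t₂.isNameOf (progFuncs P) ∧ t₁ ≠ t₂ ∧
        φ = Formula.imp (Formula.not (Formula.box (Formula.eq t₁ t₂)))
              (Formula.not (Formula.eq t₁ t₂))}

/-- The positive introspection axioms `α ⊃ 𝖫α` for objective ground atoms of `Σ_P`. -/
def PIAax {S : Sig} (P : Program S) : Set (Formula S) :=
  {φ | ∃ a : PAtom S, a.p ∈ progPreds P ∧ (∀ i, (a.args i).isNameOf (progFuncs P)) ∧
        φ = Formula.imp a.toFormula (Formula.box a.toFormula)}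

def ruleEmb {S : Sig} (emb : Rule S → Formula S) (P : Program S) : Set (Formula S) :=
  {φ | ∃ r ∈ P, φ = emb r}

def tauHP {S : Sig} (P : Program S) : Set (Formula S) := ruleEmb embHP P ∪ UNAax P
def tauEB {S : Sig} (P : Program S) : Set (Formula S) := ruleEmb embEB P ∪ UNAax P
def tauEH {S : Sig} (P : Program S) : Set (Formula S) := ruleEmb embEH P ∪ UNAax P
def tauHPv {S : Sig} (P : Program S) : Set (Formula S) := ruleEmb embHP P ∪ PIAax P ∪ UNAax P
def tauEBv {S : Sig} (P : Program S) : Set (Formula S) := ruleEmb embEB P ∪ PIAax P ∪ UNAax P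
def tauEHv {S : Sig} (P : Program S) : Set (Formula S) := ruleEmb embEH P ∪ UNAax P
def tauHPminus {S : Sig} (P : Program S) : Set (Formula S) := ruleEmb embHP P
def tauEHvminus {S : Sig} (P : Program S) : Set (Formula S) := ruleEmb embEH P

/-! ## Grounding and stable models -/

/-- The grounding of `P`: all ground instantiations of rules of `P`
obtained by replacing variables with names of `Σ_P`. -/
def grP {S : Sig} (P : Program S) : Program S :=
  {r' | ∃ r ∈ P, ∃ σ : ℕ → Term S,
        (∀ x, r.hasVar x → (σ x).isNameOf (progFuncs P)) ∧ r' = Rule.applySubst σ r}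

/-- A Herbrand interpretation: a set of ground atomic formulas. -/
def HerbrandI {S : Sig} (M : Set (Formula S)) : Prop :=
  ∀ φ ∈ M, φ.isAtomic ∧ φ.isGround

/-- `M` is a Herbrand model of the positive ground program `Q` (relative to the
names of `Σ_P`): rules are satisfied and `t = t ∈ M` for every name `t`. -/
def HerbrandModelOf {S : Sig} (P Q : Program S) (M : Set (Formula S)) : Prop :=
  HerbrandI M ∧
  (∀ r ∈ Q, (∀ b ∈ r.pos, PAtom.toFormula b ∈ M) → ∃ h ∈ r.head, PAtom.toFormula h ∈ M) ∧
  (∀ t : Term S, t.isNameOf (progFuncs P) → Formula.eq t t ∈ M)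

/-- The Gelfond–Lifschitz reduct of `gr(P)` with respect to `M`. -/
def reduct {S : Sig} (P : Program S) (M : Set (Formula S)) : Program S :=
  {r' | ∃ r ∈ grP P, (∀ c ∈ r.neg, PAtom.toFormula c ∉ M) ∧
        r' = ⟨r.head, r.pos, [], r.vars⟩}

/-- `M` is a stable model of `P`: a minimal Herbrand model of the reduct of `gr(P)` w.r.t. `M`. -/
def isStableModel {S : Sig} (P : Program S) (M : Set (Formula S)) : Prop :=
  HerbrandModelOf P (reduct P M) M ∧
  ∀ M', M' ⊆ M → HerbrandModelOf P (reduct P M) M' → M' = M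

/-! ## First-order theories and classes thereof -/

/-- An FO theory: a set of objective sentences. -/
def FOTheory {S : Sig} (Φ : Set (Formula S)) : Prop :=
  ∀ φ ∈ Φ, φ.isObjective ∧ φ.closed

def theoryFuncs {S : Sig} (Φ : Set (Formula S)) : Set S.Func := {f | ∃ φ ∈ Φ, f ∈ φ.funcs}
def theoryPreds {S : Sig} (Φ : Set (Formula S)) : Set S.Pred := {q | ∃ φ ∈ Φ, q ∈ φ.preds}

/-- The ambient signature is exactly the union of the signatures of `Φ` and `P`. -/
def CoverSig {S : Sig} (Φ : Set (Formula S)) (P : Program S) : Prop :=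
  (∀ f : S.Func, f ∈ theoryFuncs Φ ∪ progFuncs P) ∧
  (∀ q : S.Pred, q ∈ theoryPreds Φ ∪ progPreds P)

def exClosure {S : Sig} (ys : List ℕ) (φ : Formula S) : Formula S := ys.foldr Formula.ex φ

/-- A Horn sentence `(∀)(b₁ ∧ … ∧ b_n ⊃ h)` with atomic `b_i`, `h`
(the consequent `h` may be absent). -/
def isHornSentence {S : Sig} (φ : Formula S) : Prop :=
  ∃ (vs : List ℕ) (bs : List (Formula S)),
    (∀ b ∈ bs, b.isAtomic) ∧
    ((∃ h : Formula S, h.isAtomic ∧ φ = uclosure vs (impOf bs h)) ∨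
     (∃ b rest, bs = b :: rest ∧ φ = uclosure vs (Formula.not (andAll b rest))))

def HornTheory {S : Sig} (Φ : Set (Formula S)) : Prop :=
  FOTheory Φ ∧ ∀ φ ∈ Φ, isHornSentence φ

/-- A generalized Horn sentence `(∀)(b₁ ∧ … ∧ b_n ⊃ ∃ȳ.h)` with atomic `b_i`, `h`,
the variables `ȳ` occurring only in `h` (the consequent may be absent). -/
def isGHornSentence {S : Sig} (φ : Formula S) : Prop :=
  ∃ (vs : List ℕ) (bs : List (Formula S)),
    (∀ b ∈ bs, b.isAtomic) ∧
    ((∃ (ys : List ℕ) (h : Formula S), h.isAtomic ∧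
        (∀ y ∈ ys, ∀ b ∈ bs, ¬ b.freeIn y) ∧
        φ = uclosure vs (impOf bs (exClosure ys h))) ∨
     (∃ b rest, bs = b :: rest ∧ φ = uclosure vs (Formula.not (andAll b rest))))

def GHornTheory {S : Sig} (Φ : Set (Formula S)) : Prop :=
  FOTheory Φ ∧ ∀ φ ∈ Φ, isGHornSentence φ

def PropTheory {S : Sig} (Φ : Set (Formula S)) : Prop :=
  FOTheory Φ ∧ ∀ φ ∈ Φ, φ.isPropositional

/-!
An interpretation satisfying a universal theory can be cut down to its named individuals, and this
changes neither the theory nor the truth of ground formulas; so the objective ground part of a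
stable expansion is decided by interpretations in which every individual is named. There, for a
stable `T` and under the unique-names axioms, `𝖫 a` holds at an assignment iff the ground instance
of `a` given by any choice of names lies in `T`. Consequently, on such interpretations

* a true atom is believed as soon as the positive introspection axioms hold, so the extra conjuncts
  `𝖫 b` in the bodies of `τ^∨_EB` are redundant;
* if the body of an instance of a normal rule under `τ_EB` is true in one interpretation, then it is
  true in all interpretations compatible with `T`, so the instance of the head lies in `T`, which
  gives the extra conjunct `𝖫 h` of `τ_EH`.

It remains to turn an objective ground part that is a fixed point into a full stable expansion. The
satisfaction of a formula depends only on beliefs of smaller modal depth, so every class of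
interpretations determines a stable belief set by recursion on that depth; and since `𝖫` is
applied only to atoms in the axioms, replacing `T` by that belief set affects none of them.
-/

/-! ## Ground terms and formulas -/

namespace Term

variable {S : Sig} {t : Term S} {w : Interp S} {β : ℕ → Option (Term S)}

theorem isGround.eval_eq (h : t.isGround) (w : Interp S) (B B' : ℕ → w.U) :
    t.eval w B = t.eval w B' := by
  induction t with
  | var x => exact h.elim
  | func f ts ih => exact congrArg (w.interpF f) (funext fun i => ih i (h i))

theorem isGround_iff_forall_not_hasVar : t.isGround ↔ ∀ x, ¬ t.hasVar x := by
  induction t with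
  | var y => simp [isGround, hasVar]
  | func f ts ih =>
    simp only [isGround, hasVar, ih, not_exists]
    exact forall_comm

theorem isGround.subst_eq (h : t.isGround) (β : ℕ → Option (Term S)) : t.subst β = t := by
  induction t with
  | var x => exact h.elim
  | func f ts ih => exact congrArg (func f) (funext fun i => ih i (h i))

theorem isGround.isNameOf {F : Set S.Func} (hF : ∀ f, f ∈ F) (h : t.isGround) : t.isNameOf F := by
  induction t with
  | var x => exact h.elim
  | func f ts ih => exact ⟨hF f, fun i => ih i (h i)⟩

theorem isGround_subst (h : ∀ x, t.hasVar x → ∃ s ∈ β x, s.isGround) : (t.subst β).isGround := by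
  induction t with
  | var x =>
    obtain ⟨s, hs, hg⟩ := h x rfl
    simpa only [subst, Option.mem_def.1 hs, Option.getD_some] using hg
  | func f ts ih => exact fun i => ih i fun x hx => h x ⟨i, hx⟩

theorem eval_subst_congr {B : ℕ → w.U} {β' : ℕ → Option (Term S)}
    (h : ∀ x, t.hasVar x → ∃ s ∈ β x, ∃ s' ∈ β' x, s.eval w B = s'.eval w B) :
    (t.subst β).eval w B = (t.subst β').eval w B := by
  induction t with
  | var x =>
    obtain ⟨s, hs, s', hs', he⟩ := h x rfl
    simpa only [subst, Option.mem_def.1 hs, Option.mem_def.1 hs', Option.getD_some] using he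
  | func f ts ih =>
    exact congrArg (w.interpF f) (funext fun i => ih i fun x hx => h x ⟨i, hx⟩)

end Term

namespace Formula

variable {S : Sig} {φ : Formula S}

theorem isGround.closed (h : φ.isGround) : φ.closed := by
  intro x
  induction φ with
  | atom p ts => exact fun ⟨i, hi⟩ => Term.isGround_iff_forall_not_hasVar.1 (h i) x hi
  | eq s t =>
    rintro (hx | hx)
    exacts [Term.isGround_iff_forall_not_hasVar.1 h.1 x hx,
      Term.isGround_iff_forall_not_hasVar.1 h.2 x hx]
  | not φ ih => exact ih h
  | and φ ψ ihφ ihψ => exact not_or.2 ⟨ihφ h.1, ihψ h.2⟩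
  | ex y φ => exact h.elim
  | box φ ih => exact ih h

theorem isGround.subst_eq (h : φ.isGround) (β : ℕ → Option (Term S)) : φ.subst β = φ := by
  induction φ with
  | atom p ts => exact congrArg (atom p) (funext fun i => (h i).subst_eq β)
  | eq s t => exact congrArg₂ eq (h.1.subst_eq β) (h.2.subst_eq β)
  | not φ ih => exact congrArg not (ih h)
  | and φ ψ ihφ ihψ => exact congrArg₂ and (ihφ h.1) (ihψ h.2)
  | ex y φ => exact h.elim
  | box φ ih => exact congrArg box (ih h)

theorem isAtomic.isObjective (h : φ.isAtomic) : φ.isObjective := by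
  cases φ <;> simp_all [isAtomic, Formula.isObjective]

theorem isAtomic.subst (h : φ.isAtomic) (β : ℕ → Option (Term S)) : (φ.subst β).isAtomic := by
  cases φ <;> simp_all [isAtomic, Formula.subst]

theorem isAtomic.isGround_of_closed (h : φ.isAtomic) (hc : φ.closed) : φ.isGround := by
  cases φ with
  | atom p ts => exact fun i => Term.isGround_iff_forall_not_hasVar.2 fun x hx => hc x ⟨i, hx⟩
  | eq s t =>
    exact ⟨Term.isGround_iff_forall_not_hasVar.2 fun x hx => hc x (.inl hx),
      Term.isGround_iff_forall_not_hasVar.2 fun x hx => hc x (.inr hx)⟩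
  | _ => exact h.elim

end Formula

theorem PAtom.isGround_toFormula_subst {S : Sig} {a : PAtom S} {β : ℕ → Option (Term S)}
    (h : ∀ x, a.hasVar x → ∃ s ∈ β x, s.isGround) : (a.toFormula.subst β).isGround :=
  fun i => Term.isGround_subst fun x hx => h x ⟨i, hx⟩

/-! ## Names of the values of variables -/

section Names

variable {S : Sig} {w : Interp S} {B B' : ℕ → w.U} {β : ℕ → Option (Term S)} {x : ℕ}

/-- `β` assigns to the variable `x` a name denoting the value of `x` under `B`; the condition on
name substitutions behind `Assoc`, localized at one variable whose value is named. -/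
def NamesAt (w : Interp S) (B : ℕ → w.U) (β : ℕ → Option (Term S)) (x : ℕ) : Prop :=
  ∃ s ∈ β x, s.isGround ∧ s.evalG w = B x

theorem NamesAt.exists_isGround (h : NamesAt w B β x) : ∃ s ∈ β x, s.isGround :=
  let ⟨s, hs, hg, _⟩ := h
  ⟨s, hs, hg⟩

theorem NamesAt.isNamed (h : NamesAt w B β x) : IsNamed w (B x) :=
  let ⟨s, _, hs⟩ := h
  ⟨s, hs⟩

theorem Assoc.namesAt (h : Assoc w B β) (hx : IsNamed w (B x)) : NamesAt w B β x :=
  let ⟨s, hs⟩ := Option.isSome_iff_exists.1 ((h x).1 hx)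
  ⟨s, hs, (h x).2 s hs⟩

theorem exists_assoc (w : Interp S) (B : ℕ → w.U) : ∃ β, Assoc w B β := by
  classical
  refine ⟨fun x => if h : IsNamed w (B x) then some h.choose else none, fun x => ?_⟩
  by_cases h : IsNamed w (B x)
  · simpa [h] using h.choose_spec
  · simp [h]

/-- The variable assignment induced by a name substitution: `x` takes the value denoted by `β x`,
and the default individual outside the domain of `β`. -/
noncomputable def Interp.assign (w : Interp S) (β : ℕ → Option (Term S)) (x : ℕ) : w.U :=
  ((β x).map (Term.evalG w)).getD w.dflt

theorem namesAt_assign (w : Interp S) (h : ∃ s ∈ β x, s.isGround) :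
    NamesAt w (w.assign β) β x := by
  obtain ⟨s, hs, hg⟩ := h
  exact ⟨s, hs, hg, by simp [Interp.assign, Option.mem_def.1 hs]⟩

theorem Term.eval_subst {t : Term S} (h : ∀ x, t.hasVar x → NamesAt w B β x) :
    (t.subst β).eval w B' = t.eval w B := by
  induction t with
  | var x =>
    obtain ⟨s, hs, hg, he⟩ := h x rfl
    simp only [subst, Option.mem_def.1 hs, Option.getD_some, eval]
    exact (hg.eval_eq w _ _).trans he
  | func f ts ih => exact congrArg (w.interpF f) (funext fun i => ih i fun x hx => h x ⟨i, hx⟩)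

theorem sat_toFormula_subst {X : Sem} {Γ : Set (Formula S)} {a : PAtom S}
    (h : ∀ x, a.hasVar x → NamesAt w B β x) :
    Sat X w Γ (a.toFormula.subst β) B' ↔ Sat X w Γ a.toFormula B := by
  have heval : (fun i => ((a.args i).subst β).eval w B') = fun i => (a.args i).eval w B :=
    funext fun i => Term.eval_subst fun x hx => h x ⟨i, hx⟩
  simp only [PAtom.toFormula, Formula.subst, Sat, heval]

end Names

/-! ## Satisfaction -/

section Satisfaction

variable {S : Sig} {X : Sem} {w : Interp S} {Γ : Set (Formula S)} {B : ℕ → w.U}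
  {φ ψ : Formula S}

theorem sat_imp : Sat X w Γ (.imp φ ψ) B ↔ (Sat X w Γ φ B → Sat X w Γ ψ B) := by
  simp only [Formula.imp, Sat, not_and, not_not]

theorem sat_andAll {l : List (Formula S)} :
    Sat X w Γ (andAll φ l) B ↔ Sat X w Γ φ B ∧ ∀ ψ ∈ l, Sat X w Γ ψ B := by
  induction l generalizing φ with
  | nil => simp [andAll]
  | cons a l ih => simp only [andAll, ih, Sat, List.forall_mem_cons, and_assoc]

theorem sat_impOf {l : List (Formula S)} :
    Sat X w Γ (impOf l φ) B ↔ ((∀ ψ ∈ l, Sat X w Γ ψ B) → Sat X w Γ φ B) := by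
  cases l with
  | nil => simp [impOf]
  | cons a l => simp only [impOf, sat_imp, sat_andAll, List.forall_mem_cons]

theorem modelsF_all {x : ℕ} : ModelsF X w Γ (.all x φ) ↔ ModelsF X w Γ φ := by
  simp only [ModelsF, Formula.all, Sat, not_exists, not_not]
  exact ⟨fun h B => by simpa using h B (B x), fun h B u => h _⟩

theorem modelsF_uclosure {vs : List ℕ} : ModelsF X w Γ (uclosure vs φ) ↔ ModelsF X w Γ φ := by
  induction vs with
  | nil => rfl
  | cons x vs ih => exact modelsF_all.trans ih

theorem modelsF_uclosure_impOf {vs : List ℕ} {l : List (Formula S)} :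
    ModelsF X w Γ (uclosure vs (impOf l φ)) ↔
      ∀ B, (∀ ψ ∈ l, Sat X w Γ ψ B) → Sat X w Γ φ B :=
  modelsF_uclosure.trans (forall_congr' fun _ => sat_impOf)

theorem modelsT_union {Φ Ψ : Set (Formula S)} :
    ModelsT X w Γ (Φ ∪ Ψ) ↔ ModelsT X w Γ Φ ∧ ModelsT X w Γ Ψ := by
  simp only [ModelsT, Set.mem_union, or_imp, forall_and]

theorem modelsT_ruleEmb {emb : Rule S → Formula S} {P : Program S} :
    ModelsT X w Γ (ruleEmb emb P) ↔ ∀ r ∈ P, ModelsF X w Γ (emb r) :=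
  ⟨fun h r hr => h _ ⟨r, hr, rfl⟩, fun h _ ⟨r, hr, hφ⟩ => hφ ▸ h r hr⟩

/-- When all associated name substitutions agree, the any-name and all-name semantics coincide. -/
theorem sat_box_iff_of_forall_assoc {p : Prop}
    (h : ∀ β, Assoc w B β → ((φ.subst β).closed ∧ φ.subst β ∈ Γ ↔ p)) :
    Sat X w Γ (.box φ) B ↔ p := by
  obtain ⟨β₀, hβ₀⟩ := exists_assoc w B
  cases X with
  | any => exact ⟨fun ⟨β, hβ, hmem⟩ => (h β hβ).1 hmem, fun hp => ⟨β₀, hβ₀, (h β₀ hβ₀).2 hp⟩⟩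
  | all => exact ⟨fun hbox => (h β₀ hβ₀).1 (hbox β₀ hβ₀), fun hp β hβ => (h β hβ).2 hp⟩

theorem sat_box_iff_mem_of_isGround (h : φ.isGround) : Sat X w Γ (.box φ) B ↔ φ ∈ Γ :=
  sat_box_iff_of_forall_assoc fun β _ => by
    rw [h.subst_eq]
    exact and_iff_right h.closed

theorem sat_congr_assignment_of_isGround (h : φ.isGround) (B B' : ℕ → w.U) :
    Sat X w Γ φ B ↔ Sat X w Γ φ B' := by
  induction φ with
  | atom p ts => simp only [Sat, fun i => (h i).eval_eq w B B']
  | eq s t => simp only [Sat, h.1.eval_eq w B B', h.2.eval_eq w B B']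
  | not φ ih => exact not_congr (ih h)
  | and φ ψ ihφ ihψ => exact and_congr (ihφ h.1) (ihψ h.2)
  | ex x φ => exact h.elim
  | box φ =>
    exact (sat_box_iff_mem_of_isGround (φ := φ) h).trans
      (sat_box_iff_mem_of_isGround (φ := φ) h).symm

end Satisfaction

/-! ## Dependence of satisfaction on the belief set -/

namespace Formula

variable {S : Sig} {φ ψ : Formula S}

/-- The arguments of the outermost occurrences of `𝖫`: up to name substitutions, the formulas whose
membership in the belief set can influence satisfaction. -/
def boxArgs : Formula S → Set (Formula S)
  | atom _ _ => ∅
  | eq _ _ => ∅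
  | not φ => φ.boxArgs
  | and φ ψ => φ.boxArgs ∪ ψ.boxArgs
  | ex _ φ => φ.boxArgs
  | box φ => {φ}

/-- The nesting depth of the modal operator `𝖫`. -/
def boxDepth : Formula S → ℕ
  | atom _ _ => 0
  | eq _ _ => 0
  | not φ => φ.boxDepth
  | and φ ψ => max φ.boxDepth ψ.boxDepth
  | ex _ φ => φ.boxDepth
  | box φ => φ.boxDepth + 1

theorem boxDepth_subst (β : ℕ → Option (Term S)) : (φ.subst β).boxDepth = φ.boxDepth := by
  induction φ generalizing β <;> simp_all [boxDepth, subst]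

theorem boxDepth_lt_of_mem_boxArgs (h : ψ ∈ φ.boxArgs) : ψ.boxDepth < φ.boxDepth := by
  induction φ with
  | atom | eq => exact h.elim
  | not φ ih => exact ih h
  | and φ χ ihφ ihχ => exact lt_max_iff.2 (h.imp ihφ ihχ)
  | ex x φ ih => exact ih h
  | box φ => exact (congrArg boxDepth h).trans_lt (Nat.lt_succ_self _)

theorem isObjective.boxArgs_eq_empty (h : φ.isObjective) : φ.boxArgs = ∅ := by
  induction φ <;> simp_all [isObjective, boxArgs]

theorem boxAtomic.isAtomic_of_mem_boxArgs (hφ : φ.boxAtomic) (h : ψ ∈ φ.boxArgs) :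
    ψ.isAtomic := by
  induction φ with
  | atom | eq => exact h.elim
  | not φ ih => exact ih hφ h
  | and φ χ ihφ ihχ => exact h.elim (ihφ hφ.1) (ihχ hφ.2)
  | ex x φ ih => exact ih hφ h
  | box φ => exact Set.mem_singleton_iff.1 h ▸ hφ

end Formula

section BeliefSets

variable {S : Sig} {X : Sem} {w : Interp S} {Γ Γ' : Set (Formula S)} {φ : Formula S}

theorem sat_congr {B : ℕ → w.U}
    (h : ∀ ψ ∈ φ.boxArgs, ∀ β, (ψ.subst β).closed → (ψ.subst β ∈ Γ ↔ ψ.subst β ∈ Γ')) :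
    Sat X w Γ φ B ↔ Sat X w Γ' φ B := by
  induction φ generalizing B with
  | atom p ts => rfl
  | eq s t => rfl
  | not φ ih => exact not_congr (ih h)
  | and φ ψ ihφ ihψ =>
    exact and_congr (ihφ fun χ hχ => h χ (.inl hχ)) (ihψ fun χ hχ => h χ (.inr hχ))
  | ex x φ ih => exact exists_congr fun _ => ih h
  | box φ =>
    have hφ := fun β => and_congr_right (h φ rfl β)
    cases X <;> simp only [Sat, hφ]

theorem modelsF_congr_of_isObjective (h : φ.isObjective) :
    ModelsF X w Γ φ ↔ ModelsF X w Γ' φ :=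
  forall_congr' fun _ => sat_congr fun _ hψ => by simp [h.boxArgs_eq_empty] at hψ

theorem modelsF_congr_of_boxDepth_lt
    (h : ∀ ψ : Formula S, ψ.boxDepth < φ.boxDepth → (ψ ∈ Γ ↔ ψ ∈ Γ')) :
    ModelsF X w Γ φ ↔ ModelsF X w Γ' φ :=
  forall_congr' fun _ => sat_congr fun _ hψ β _ =>
    h _ ((Formula.boxDepth_subst β).trans_lt (Formula.boxDepth_lt_of_mem_boxArgs hψ))

theorem modelsT_congr_of_boxAtomic {Φ : Set (Formula S)} (hΦ : ∀ φ ∈ Φ, φ.boxAtomic)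
    (h : ∀ ψ : Formula S, ψ.isObjective → ψ.isGround → (ψ ∈ Γ ↔ ψ ∈ Γ')) :
    ModelsT X w Γ Φ ↔ ModelsT X w Γ' Φ :=
  forall₂_congr fun φ hφ => forall_congr' fun _ => sat_congr fun _ hψ β hc =>
    have hψβ := ((hΦ φ hφ).isAtomic_of_mem_boxArgs hψ).subst β
    h _ hψβ.isObjective (hψβ.isGround_of_closed hc)

/-- Approximations of `beliefSet`; the `n`-th one is correct on formulas of modal depth `< n`. -/
def beliefStage (X : Sem) (K : Set (Interp S)) : ℕ → Set (Formula S)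
  | 0 => ∅
  | n + 1 => {φ | ∀ w ∈ K, ModelsF X w (beliefStage X K n) φ}

/-- The stable belief set of an agent whose possible worlds are the interpretations in `K`. -/
def beliefSet (X : Sem) (K : Set (Interp S)) : Set (Formula S) :=
  {φ | φ ∈ beliefStage X K (φ.boxDepth + 1)}

theorem mem_beliefStage_iff_mem_beliefSet {K : Set (Interp S)} {n : ℕ} (h : φ.boxDepth < n) :
    φ ∈ beliefStage X K n ↔ φ ∈ beliefSet X K := by
  induction hd : φ.boxDepth using Nat.strong_induction_on generalizing φ n with
  | _ d ih =>
    subst hd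
    obtain ⟨m, rfl⟩ := Nat.exists_eq_succ_of_ne_zero (Nat.ne_zero_of_lt h)
    refine forall₂_congr fun w _ => modelsF_congr_of_boxDepth_lt fun ψ hψ => ?_
    rw [ih _ hψ (by omega) rfl, ih _ hψ hψ rfl]

theorem mem_beliefSet {K : Set (Interp S)} :
    φ ∈ beliefSet X K ↔ ∀ w ∈ K, ModelsF X w (beliefSet X K) φ :=
  forall₂_congr fun _ _ => modelsF_congr_of_boxDepth_lt fun _ => mem_beliefStage_iff_mem_beliefSet

theorem exists_stableExp_ogOf_eq {Φ T : Set (Formula S)} (hΦ : ∀ φ ∈ Φ, φ.boxAtomic)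
    (hT : ∀ φ : Formula S, φ.isObjective → φ.isGround → (φ ∈ T ↔ Entails X Φ T φ)) :
    ∃ T', StableExp X Φ T' ∧ ogOf T = ogOf T' := by
  let K : Set (Interp S) := {w | ModelsT X w T Φ}
  have hog (φ : Formula S) (ho : φ.isObjective) (hg : φ.isGround) :
      φ ∈ T ↔ φ ∈ beliefSet X K := by
    rw [hT φ ho hg, mem_beliefSet]
    exact forall₂_congr fun w _ => modelsF_congr_of_isObjective ho
  refine ⟨beliefSet X K, Set.ext fun φ => mem_beliefSet.trans <| forall_congr' fun w =>
    imp_congr_left (modelsT_congr_of_boxAtomic hΦ hog), Set.ext fun φ => ?_⟩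
  exact and_congr_left fun h => hog φ h.1 h.2

end BeliefSets

/-! ## Universal formulas and the substructure of named individuals -/

namespace Formula

variable {S : Sig} {φ ψ : Formula S} {l : List (Formula S)}

/-- No quantifier occurs outside the scope of `𝖫`. -/
def isQuantifierFree : Formula S → Prop
  | atom _ _ => True
  | eq _ _ => True
  | not φ => φ.isQuantifierFree
  | and φ ψ => φ.isQuantifierFree ∧ ψ.isQuantifierFree
  | ex _ _ => False
  | box _ => True

theorem isGround.isQuantifierFree (h : φ.isGround) : φ.isQuantifierFree := by
  induction φ <;> simp_all [isGround, Formula.isQuantifierFree]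

/-- The propositional combinations of atoms and modal atoms `𝖫 α` with `α` atomic, the shape of the
matrix of every axiom in the embeddings of logic programs. -/
inductive IsMatrix : Formula S → Prop
  | atom (p : S.Pred) (ts : Fin (S.arP p) → Term S) : IsMatrix (.atom p ts)
  | eq (s t : Term S) : IsMatrix (.eq s t)
  | box {φ : Formula S} : φ.isAtomic → IsMatrix (.box φ)
  | not {φ : Formula S} : IsMatrix φ → IsMatrix (.not φ)
  | and {φ ψ : Formula S} : IsMatrix φ → IsMatrix ψ → IsMatrix (.and φ ψ)

namespace IsMatrix

theorem isQuantifierFree (h : φ.IsMatrix) : φ.isQuantifierFree := by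
  induction h <;> simp_all [Formula.isQuantifierFree]

theorem boxAtomic (h : φ.IsMatrix) : φ.boxAtomic := by
  induction h <;> simp_all [Formula.boxAtomic]

theorem imp (hφ : φ.IsMatrix) (hψ : ψ.IsMatrix) : (φ.imp ψ).IsMatrix :=
  .not (.and hφ (.not hψ))

theorem andAll (hφ : φ.IsMatrix) (hl : ∀ ψ ∈ l, ψ.IsMatrix) : (andAll φ l).IsMatrix := by
  induction l generalizing φ with
  | nil => exact hφ
  | cons a l ih =>
    rw [List.forall_mem_cons] at hl
    exact ih (.and hφ hl.1) hl.2

theorem orAll (hφ : φ.IsMatrix) (hl : ∀ ψ ∈ l, ψ.IsMatrix) : (orAll φ l).IsMatrix := by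
  induction l generalizing φ with
  | nil => exact hφ
  | cons a l ih =>
    rw [List.forall_mem_cons] at hl
    exact ih (.not (.and (.not hφ) (.not hl.1))) hl.2

theorem disjOf (hl : ∀ ψ ∈ l, ψ.IsMatrix) : (disjOf l).IsMatrix := by
  cases l with
  | nil => exact .eq _ _
  | cons a l =>
    rw [List.forall_mem_cons] at hl
    exact orAll hl.1 hl.2

theorem impOf (hl : ∀ ψ ∈ l, ψ.IsMatrix) (hφ : φ.IsMatrix) : (impOf l φ).IsMatrix := by
  cases l with
  | nil => exact hφ
  | cons a l =>
    rw [List.forall_mem_cons] at hl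
    exact imp (andAll hl.1 hl.2) hφ

end IsMatrix

/-- A universal closure of a formula satisfying `IsMatrix`. -/
def IsUniversal (φ : Formula S) : Prop :=
  ∃ vs ψ, φ = uclosure vs ψ ∧ ψ.IsMatrix

theorem IsMatrix.isUniversal (h : φ.IsMatrix) : φ.IsUniversal :=
  ⟨[], φ, rfl, h⟩

theorem IsUniversal.boxAtomic (h : φ.IsUniversal) : φ.boxAtomic := by
  obtain ⟨vs, ψ, rfl, hψ⟩ := h
  induction vs with
  | nil => exact hψ.boxAtomic
  | cons _ _ ih => exact ih

end Formula

section NamedSub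

variable {S : Sig} {X : Sem} {w : Interp S} {Γ : Set (Formula S)} {φ : Formula S}
  {h : ∃ k, IsNamed w k}

theorem isNamed_interpF {f : S.Func} {us : Fin (S.arF f) → w.U} (h : ∀ i, IsNamed w (us i)) :
    IsNamed w (w.interpF f us) := by
  choose ts hg he using h
  exact ⟨.func f ts, hg, congrArg (w.interpF f) (funext he)⟩

/-- The substructure of `w` consisting of the named individuals. -/
def namedSub (w : Interp S) (h : ∃ k, IsNamed w k) : Interp S where
  U := {k : w.U // IsNamed w k}
  nonempty := nonempty_subtype.2 h
  interpF f us := ⟨w.interpF f fun i => us i, isNamed_interpF fun i => (us i).2⟩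
  interpP p us := w.interpP p fun i => us i

theorem coe_eval_namedSub (B : ℕ → (namedSub w h).U) (t : Term S) :
    (t.eval (namedSub w h) B).1 = t.eval w fun x => (B x).1 := by
  induction t with
  | var x => rfl
  | func f ts ih => exact congrArg (w.interpF f) (funext ih)

theorem coe_evalG_namedSub {t : Term S} (ht : t.isGround) :
    (t.evalG (namedSub w h)).1 = t.evalG w :=
  (coe_eval_namedSub _ t).trans (ht.eval_eq w _ _)

theorem isNamed_namedSub (k : (namedSub w h).U) : IsNamed (namedSub w h) k :=
  let ⟨t, ht, he⟩ := k.2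
  ⟨t, ht, Subtype.ext ((coe_evalG_namedSub ht).trans he)⟩

theorem assoc_namedSub {B : ℕ → (namedSub w h).U} {β : ℕ → Option (Term S)} :
    Assoc (namedSub w h) B β ↔ Assoc w (fun x => (B x).1) β := by
  refine forall_congr' fun x => and_congr ?_ ?_
  · exact imp_congr_left (iff_of_true (isNamed_namedSub (B x)) (B x).2)
  · refine forall₂_congr fun t _ => and_congr_right fun ht => ?_
    rw [← coe_evalG_namedSub (h := h) ht]
    exact Subtype.ext_iff

theorem sat_namedSub (hφ : φ.isQuantifierFree) {B : ℕ → (namedSub w h).U} :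
    Sat X (namedSub w h) Γ φ B ↔ Sat X w Γ φ fun x => (B x).1 := by
  induction φ with
  | atom p ts =>
    simp only [Sat, ← coe_eval_namedSub]
    rfl
  | eq s t =>
    simp only [Sat, ← coe_eval_namedSub]
    exact Subtype.ext_iff
  | not φ ih => exact not_congr (ih hφ)
  | and φ ψ ihφ ihψ => exact and_congr (ihφ hφ.1) (ihψ hφ.2)
  | ex x φ => exact hφ.elim
  | box φ => cases X <;> simp only [Sat, assoc_namedSub]

theorem Formula.IsUniversal.modelsF_namedSub (hφ : φ.IsUniversal) (hw : ModelsF X w Γ φ) :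
    ModelsF X (namedSub w h) Γ φ := by
  obtain ⟨vs, ψ, rfl, hψ⟩ := hφ
  rw [modelsF_uclosure] at hw ⊢
  exact fun B => (sat_namedSub hψ.isQuantifierFree).2 (hw _)

theorem modelsF_of_modelsF_namedSub (hφ : φ.isGround) (hw : ModelsF X (namedSub w h) Γ φ) :
    ModelsF X w Γ φ := fun B =>
  (sat_congr_assignment_of_isGround hφ _ B).1
    ((sat_namedSub hφ.isQuantifierFree).1 (hw fun _ => (namedSub w h).dflt))

end NamedSub

/-! ## Interpretations naming the values of all program variables -/

section VarsNamed

variable {S : Sig} {X : Sem} {P : Program S} {w : Interp S} {T : Set (Formula S)}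

/-- Every possible value of a variable of `P` is named. For a variable-free `P` this holds of every
`w`, since there may then be no names at all. -/
def VarsNamed (P : Program S) (w : Interp S) : Prop :=
  (∃ r ∈ P, ∃ x, r.hasVar x) → ∀ k, IsNamed w k

theorem VarsNamed.namesAt (hn : VarsNamed P w) {r : Rule S} (hr : r ∈ P) {B : ℕ → w.U}
    {β : ℕ → Option (Term S)} (hβ : Assoc w B β) {x : ℕ} (hx : r.hasVar x) : NamesAt w B β x :=
  hβ.namesAt (hn ⟨r, hr, x, hx⟩ _)

theorem exists_isNamed_of_hasVar (hg : goodSig P) (w : Interp S) {r : Rule S} (hr : r ∈ P) {x : ℕ}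
    (hx : r.hasVar x) : ∃ k, IsNamed w k := by
  obtain ⟨a, ha, i, _⟩ := hx
  obtain ⟨c, _, hc⟩ := hg ⟨a.p, ⟨r, hr, a, ha, rfl⟩, i.pos⟩
  have : IsEmpty (Fin (S.arF c)) := hc ▸ Fin.isEmpty
  exact ⟨_, .func c isEmptyElim, isEmptyElim, rfl⟩

theorem entails_iff_forall_varsNamed (hg : goodSig P) {Φ : Set (Formula S)}
    (hΦ : ∀ φ ∈ Φ, φ.IsUniversal) {φ : Formula S} (hφ : φ.isGround) :
    Entails X Φ T φ ↔ ∀ w, VarsNamed P w → ModelsT X w T Φ → ModelsF X w T φ := by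
  refine ⟨fun h w _ => h w, fun h w hw => ?_⟩
  by_cases hw₀ : ∃ k, IsNamed w k
  · exact modelsF_of_modelsF_namedSub hφ <|
      h (namedSub w hw₀) (fun _ => isNamed_namedSub) fun ψ hψ =>
        (hΦ ψ hψ).modelsF_namedSub (hw ψ hψ)
  · exact h w (fun ⟨_, hr, _, hx⟩ => absurd (exists_isNamed_of_hasVar hg w hr hx) hw₀) hw

theorem expEquivSel_ogOf_of_forall_varsNamed (hg : goodSig P) {Φ₁ Φ₂ : Set (Formula S)}
    (hΦ₁ : ∀ φ ∈ Φ₁, φ.IsUniversal) (hΦ₂ : ∀ φ ∈ Φ₂, φ.IsUniversal)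
    (h : ∀ T, StableExp X Φ₁ T ∨ StableExp X Φ₂ T →
      ∀ w, VarsNamed P w → (ModelsT X w T Φ₁ ↔ ModelsT X w T Φ₂)) :
    ExpEquivSel X ogOf Φ₁ Φ₂ := by
  have hent (T) (hT : StableExp X Φ₁ T ∨ StableExp X Φ₂ T) (φ : Formula S) (hφ : φ.isGround) :
      Entails X Φ₁ T φ ↔ Entails X Φ₂ T φ := by
    rw [entails_iff_forall_varsNamed hg hΦ₁ hφ, entails_iff_forall_varsNamed hg hΦ₂ hφ]
    exact forall₂_congr fun w hw => imp_congr_left (h T hT w hw)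
  constructor
  · exact fun T hT => exists_stableExp_ogOf_eq (fun φ hφ => (hΦ₂ φ hφ).boxAtomic)
      fun φ _ hφ => (Set.ext_iff.1 hT φ).trans (hent T (.inl hT) φ hφ)
  · intro T hT
    obtain ⟨T', hT', hog⟩ := exists_stableExp_ogOf_eq (fun φ hφ => (hΦ₁ φ hφ).boxAtomic)
      fun φ _ hφ => (Set.ext_iff.1 hT φ).trans (hent T (.inr hT) φ hφ).symm
    exact ⟨T', hT', hog.symm⟩

end VarsNamed

/-! ## The axioms of the embeddings -/

section EmbeddingTheories

variable {S : Sig} {X : Sem} {P : Program S} {w : Interp S} {T : Set (Formula S)} {φ : Formula S}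

theorem isUniversal_of_mem_UNAax (h : φ ∈ UNAax P) : φ.IsUniversal := by
  obtain ⟨s, t, _, _, _, rfl⟩ := h
  exact (Formula.IsMatrix.imp (.not (.box (φ := .eq s t) trivial)) (.not (.eq s t))).isUniversal

theorem isUniversal_of_mem_PIAax (h : φ ∈ PIAax P) : φ.IsUniversal := by
  obtain ⟨a, _, _, rfl⟩ := h
  exact (Formula.IsMatrix.imp (.atom a.p a.args) (.box (φ := a.toFormula) trivial)).isUniversal

theorem isMatrix_of_mem_bodyE {r : Rule S} (h : φ ∈ bodyE r) : φ.IsMatrix := by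
  rcases List.mem_append.1 h with h | h <;> obtain ⟨a, _, rfl⟩ := List.mem_map.1 h
  exacts [.and (.atom a.p a.args) (.box trivial), .not (.box trivial)]

theorem isMatrix_of_mem_bodyHP {r : Rule S} (h : φ ∈ bodyHP r) : φ.IsMatrix := by
  rcases List.mem_append.1 h with h | h <;> obtain ⟨a, _, rfl⟩ := List.mem_map.1 h
  exacts [.atom a.p a.args, .not (.box trivial)]

theorem isUniversal_uclosure_impOf_disjOf {f : PAtom S → Formula S} (hf : ∀ a, (f a).IsMatrix)
    {body : List (Formula S)} (hbody : ∀ φ ∈ body, φ.IsMatrix) (vs : List ℕ)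
    (head : List (PAtom S)) : (uclosure vs (impOf body (disjOf (head.map f)))).IsUniversal :=
  ⟨vs, _, rfl, .impOf hbody (.disjOf (List.forall_mem_map.2 fun a _ => hf a))⟩

theorem isUniversal_embHP (r : Rule S) : (embHP r).IsUniversal :=
  isUniversal_uclosure_impOf_disjOf (fun a => .atom a.p a.args)
    (fun _ => isMatrix_of_mem_bodyHP) _ _

theorem isUniversal_embEB (r : Rule S) : (embEB r).IsUniversal :=
  isUniversal_uclosure_impOf_disjOf (fun a => .atom a.p a.args)
    (fun _ => isMatrix_of_mem_bodyE) _ _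

theorem isUniversal_embEH (r : Rule S) : (embEH r).IsUniversal :=
  isUniversal_uclosure_impOf_disjOf
    (fun a => .and (.atom a.p a.args) (.box (φ := a.toFormula) trivial))
    (fun _ => isMatrix_of_mem_bodyE) _ _

theorem isUniversal_of_mem_ruleEmb {emb : Rule S → Formula S} (hemb : ∀ r, (emb r).IsUniversal)
    (h : φ ∈ ruleEmb emb P) : φ.IsUniversal :=
  let ⟨r, _, hφ⟩ := h
  hφ ▸ hemb r

theorem forall_mem_bodyE_sat_iff {r : Rule S} {B : ℕ → w.U} :
    (∀ ψ ∈ bodyE r, Sat X w T ψ B) ↔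
      (∀ b ∈ r.pos, Sat X w T b.toFormula B ∧ Sat X w T (.box b.toFormula) B) ∧
        ∀ c ∈ r.neg, ¬ Sat X w T (.box c.toFormula) B := by
  rw [bodyE, List.forall_mem_append, List.forall_mem_map, List.forall_mem_map]
  rfl

theorem forall_mem_bodyHP_sat_iff {r : Rule S} {B : ℕ → w.U} :
    (∀ ψ ∈ bodyHP r, Sat X w T ψ B) ↔
      (∀ b ∈ r.pos, Sat X w T b.toFormula B) ∧
        ∀ c ∈ r.neg, ¬ Sat X w T (.box c.toFormula) B := by
  rw [bodyHP, List.forall_mem_append, List.forall_mem_map, List.forall_mem_map]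
  rfl

theorem eq_mem_of_modelsT_UNAax (hF : ∀ f, f ∈ progFuncs P) (hUNA : ModelsT X w T (UNAax P))
    {s t : Term S} (hs : s.isGround) (ht : t.isGround) (hst : s.evalG w = t.evalG w)
    (hne : s ≠ t) : Formula.eq s t ∈ T := by
  have hax := hUNA _ ⟨s, t, hs.isNameOf hF, ht.isNameOf hF, hne, rfl⟩ fun _ => w.dflt
  rw [sat_imp] at hax
  by_contra hmem
  exact hax (fun hbox => hmem ((sat_box_iff_mem_of_isGround (φ := .eq s t) ⟨hs, ht⟩).1 hbox)) hst

theorem mem_of_modelsT_PIAax (hF : ∀ f, f ∈ progFuncs P) (hPIA : ModelsT X w T (PIAax P))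
    {a : PAtom S} (hp : a.p ∈ progPreds P) (ha : a.isGround) {B : ℕ → w.U}
    (hsat : Sat X w T a.toFormula B) : a.toFormula ∈ T :=
  (sat_box_iff_mem_of_isGround (φ := a.toFormula) ha).1 <|
    sat_imp.1 (hPIA _ ⟨a, hp, fun i => (ha i).isNameOf hF, rfl⟩ B) hsat

end EmbeddingTheories

/-! ## Modal atoms as ground instances in a stable expansion -/

section StableExp

variable {S : Sig} {X : Sem} {P : Program S} {w : Interp S} {Φ T : Set (Formula S)}
  {B : ℕ → w.U} {β β' : ℕ → Option (Term S)} {a : PAtom S} {r : Rule S}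

theorem StableExp.mem_iff (hT : StableExp X Φ T) {φ : Formula S} : φ ∈ T ↔ Entails X Φ T φ :=
  Set.ext_iff.1 hT φ

theorem StableExp.eq_self_mem (hT : StableExp X Φ T) (t : Term S) : Formula.eq t t ∈ T :=
  hT.mem_iff.2 fun _ _ _ => rfl

theorem StableExp.subst_mem_iff (hT : StableExp X Φ T)
    (h : ∀ x, a.hasVar x → ∃ s ∈ β x, ∃ s' ∈ β' x, Formula.eq s s' ∈ T) :
    a.toFormula.subst β ∈ T ↔ a.toFormula.subst β' ∈ T := by
  rw [hT.mem_iff, hT.mem_iff]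
  refine forall₂_congr fun w hw => forall_congr' fun B => ?_
  have heval : (fun i => ((a.args i).subst β).eval w B) =
      fun i => ((a.args i).subst β').eval w B := by
    refine funext fun i => Term.eval_subst_congr fun x hx => ?_
    obtain ⟨s, hs, s', hs', he⟩ := h x ⟨i, hx⟩
    exact ⟨s, hs, s', hs', hT.mem_iff.1 he w hw B⟩
  simp only [PAtom.toFormula, Formula.subst, Sat, heval]

theorem StableExp.sat_box_iff_subst_mem (hT : StableExp X Φ T) (hF : ∀ f, f ∈ progFuncs P)
    (hUNA : ModelsT X w T (UNAax P)) (hβ : ∀ x, a.hasVar x → NamesAt w B β x) :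
    Sat X w T (.box a.toFormula) B ↔ a.toFormula.subst β ∈ T := by
  refine sat_box_iff_of_forall_assoc fun β' hβ' => ?_
  have hnames (x) (hx : a.hasVar x) : NamesAt w B β' x := hβ'.namesAt (hβ x hx).isNamed
  have hclosed : (a.toFormula.subst β').closed :=
    (PAtom.isGround_toFormula_subst fun x hx => (hnames x hx).exists_isGround).closed
  rw [and_iff_right hclosed]
  refine hT.subst_mem_iff fun x hx => ?_
  obtain ⟨s', hs', hg', he'⟩ := hnames x hx
  obtain ⟨s, hs, hg, he⟩ := hβ x hx
  refine ⟨s', hs', s, hs, ?_⟩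
  rcases eq_or_ne s' s with rfl | hne
  · exact hT.eq_self_mem s'
  · exact eq_mem_of_modelsT_UNAax hF hUNA hg' hg (he'.trans he.symm) hne

theorem StableExp.forall_mem_bodyE_sat_iff_subst_mem (hT : StableExp X Φ T)
    (hF : ∀ f, f ∈ progFuncs P) (hUNA : ModelsT X w T (UNAax P))
    (hβ : ∀ x, r.hasVar x → NamesAt w B β x) :
    (∀ ψ ∈ bodyE r, Sat X w T ψ B) ↔
      (∀ b ∈ r.pos, Sat X w T b.toFormula B ∧ b.toFormula.subst β ∈ T) ∧
        ∀ c ∈ r.neg, c.toFormula.subst β ∉ T := by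
  have hbox (a) (ha : a ∈ r.atoms) : Sat X w T (.box a.toFormula) B ↔ a.toFormula.subst β ∈ T :=
    hT.sat_box_iff_subst_mem hF hUNA fun x hx => hβ x ⟨a, ha, hx⟩
  rw [forall_mem_bodyE_sat_iff]
  exact and_congr
    (forall₂_congr fun b hb => and_congr_right fun _ => hbox b (by simp [Rule.atoms, hb]))
    (forall₂_congr fun c hc => not_congr (hbox c (by simp [Rule.atoms, hc])))

end StableExp

/-! ## Comparing the embeddings -/

section Embeddings

variable {S : Sig} {X : Sem} {P : Program S} {w : Interp S} {Φ T : Set (Formula S)}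

theorem modelsF_embEB_iff_of_head_eq {r : Rule S} {a : PAtom S} (ha : r.head = [a]) :
    ModelsF X w T (embEB r) ↔
      ∀ B, (∀ ψ ∈ bodyE r, Sat X w T ψ B) → Sat X w T a.toFormula B := by
  rw [embEB, ha]
  exact modelsF_uclosure_impOf

theorem modelsF_embEH_iff_of_head_eq {r : Rule S} {a : PAtom S} (ha : r.head = [a]) :
    ModelsF X w T (embEH r) ↔ ∀ B, (∀ ψ ∈ bodyE r, Sat X w T ψ B) →
      Sat X w T a.toFormula B ∧ Sat X w T (.box a.toFormula) B := by
  rw [embEH, ha]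
  exact modelsF_uclosure_impOf

theorem modelsT_tauEB_of_modelsT_tauEH (hP : progNormal P) (hw : ModelsT X w T (tauEH P)) :
    ModelsT X w T (tauEB P) := by
  rw [tauEB, modelsT_union, modelsT_ruleEmb]
  rw [tauEH, modelsT_union, modelsT_ruleEmb] at hw
  refine ⟨fun r hr => ?_, hw.2⟩
  obtain ⟨a, ha⟩ := List.length_eq_one_iff.1 (hP r hr)
  exact (modelsF_embEB_iff_of_head_eq ha).2 fun B hbody =>
    ((modelsF_embEH_iff_of_head_eq ha).1 (hw.1 r hr) B hbody).1

theorem StableExp.head_subst_mem (hT : StableExp X Φ T) (hF : ∀ f, f ∈ progFuncs P)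
    (hΦ : ∀ w, ModelsT X w T Φ → ModelsT X w T (tauEB P)) {r : Rule S} (hr : r ∈ P) {a : PAtom S}
    (ha : r.head = [a]) {β : ℕ → Option (Term S)}
    (hβ : ∀ x, r.hasVar x → ∃ s ∈ β x, s.isGround) (hpos : ∀ b ∈ r.pos, b.toFormula.subst β ∈ T)
    (hneg : ∀ c ∈ r.neg, c.toFormula.subst β ∉ T) : a.toFormula.subst β ∈ T := by
  refine hT.mem_iff.2 fun w hw B => ?_
  obtain ⟨hrules, hUNA⟩ := modelsT_union.1 (hΦ w hw)
  have hnames (x) (hx : r.hasVar x) : NamesAt w (w.assign β) β x := namesAt_assign w (hβ x hx)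
  have hsat (b) (hb : b ∈ r.atoms) :
      Sat X w T (b.toFormula.subst β) B ↔ Sat X w T b.toFormula (w.assign β) :=
    sat_toFormula_subst fun x hx => hnames x ⟨b, hb, hx⟩
  have hbody : ∀ ψ ∈ bodyE r, Sat X w T ψ (w.assign β) := by
    rw [hT.forall_mem_bodyE_sat_iff_subst_mem hF hUNA hnames]
    refine ⟨fun b hb => ⟨?_, hpos b hb⟩, hneg⟩
    exact (hsat b (by simp [Rule.atoms, hb])).1 (hT.mem_iff.1 (hpos b hb) w hw B)
  exact (hsat a (by simp [Rule.atoms, ha])).2 <|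
    (modelsF_embEB_iff_of_head_eq ha).1 (modelsT_ruleEmb.1 hrules r hr) _ hbody

theorem StableExp.modelsT_tauEH_of_modelsT_tauEB (hT : StableExp X Φ T)
    (hF : ∀ f, f ∈ progFuncs P) (hP : progNormal P)
    (hΦ : ∀ w, ModelsT X w T Φ → ModelsT X w T (tauEB P)) (hn : VarsNamed P w)
    (hw : ModelsT X w T (tauEB P)) : ModelsT X w T (tauEH P) := by
  rw [tauEB, modelsT_union, modelsT_ruleEmb] at hw
  rw [tauEH, modelsT_union, modelsT_ruleEmb]
  obtain ⟨hrules, hUNA⟩ := hw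
  refine ⟨fun r hr => ?_, hUNA⟩
  obtain ⟨a, ha⟩ := List.length_eq_one_iff.1 (hP r hr)
  refine (modelsF_embEH_iff_of_head_eq ha).2 fun B hbody =>
    ⟨(modelsF_embEB_iff_of_head_eq ha).1 (hrules r hr) B hbody, ?_⟩
  obtain ⟨β, hβ⟩ := exists_assoc w B
  have hnames (x) (hx : r.hasVar x) : NamesAt w B β x := hn.namesAt hr hβ hx
  obtain ⟨hpos, hneg⟩ := (hT.forall_mem_bodyE_sat_iff_subst_mem hF hUNA hnames).1 hbody
  have ha' : a ∈ r.atoms := by simp [Rule.atoms, ha]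
  refine (hT.sat_box_iff_subst_mem hF hUNA fun x hx => hnames x ⟨a, ha', hx⟩).2 ?_
  exact hT.head_subst_mem hF hΦ hr ha (fun x hx => (hnames x hx).exists_isGround)
    (fun b hb => (hpos b hb).2) hneg

theorem sat_box_of_sat (hF : ∀ f, f ∈ progFuncs P) (hn : VarsNamed P w)
    (hPIA : ModelsT X w T (PIAax P)) {r : Rule S} (hr : r ∈ P) {a : PAtom S} (ha : a ∈ r.atoms)
    {B : ℕ → w.U} (hsat : Sat X w T a.toFormula B) : Sat X w T (.box a.toFormula) B := by
  refine (sat_box_iff_of_forall_assoc (p := True) fun β hβ => iff_true_intro ?_).2 trivial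
  have hnames (x) (hx : a.hasVar x) : NamesAt w B β x := hn.namesAt hr hβ ⟨a, ha, hx⟩
  have hground := PAtom.isGround_toFormula_subst fun x hx => (hnames x hx).exists_isGround
  exact ⟨hground.closed,
    mem_of_modelsT_PIAax (a := ⟨a.p, fun i => (a.args i).subst β⟩) hF hPIA ⟨r, hr, a, ha, rfl⟩
      hground ((sat_toFormula_subst (B' := B) hnames).2 hsat)⟩

theorem modelsF_embHP_iff_modelsF_embEB (hF : ∀ f, f ∈ progFuncs P) (hn : VarsNamed P w)
    (hPIA : ModelsT X w T (PIAax P)) {r : Rule S} (hr : r ∈ P) :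
    ModelsF X w T (embHP r) ↔ ModelsF X w T (embEB r) := by
  rw [embHP, embEB, modelsF_uclosure_impOf, modelsF_uclosure_impOf]
  refine forall_congr' fun B => imp_congr_left ?_
  rw [forall_mem_bodyHP_sat_iff, forall_mem_bodyE_sat_iff]
  refine and_congr_left fun _ => forall₂_congr fun b hb => ?_
  exact (and_iff_left_of_imp (sat_box_of_sat hF hn hPIA hr (by simp [Rule.atoms, hb]))).symm

theorem modelsT_tauHPv_iff_modelsT_tauEBv (hF : ∀ f, f ∈ progFuncs P) (hn : VarsNamed P w) :
    ModelsT X w T (tauHPv P) ↔ ModelsT X w T (tauEBv P) := by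
  simp only [tauHPv, tauEBv, modelsT_union, modelsT_ruleEmb]
  exact and_congr_left fun _ => and_congr_left fun hPIA =>
    forall₂_congr fun r hr => modelsF_embHP_iff_modelsF_embEB hF hn hPIA hr

theorem expEquivSel_tauEB_tauEH (hF : ∀ f, f ∈ progFuncs P) (hg : goodSig P)
    (hP : progNormal P) : ExpEquivSel X ogOf (tauEB P) (tauEH P) := by
  refine expEquivSel_ogOf_of_forall_varsNamed hg ?_ ?_ fun T hT w hn => ⟨fun hw => ?_,
    modelsT_tauEB_of_modelsT_tauEH hP⟩
  · rintro φ (h | h)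
    exacts [isUniversal_of_mem_ruleEmb isUniversal_embEB h, isUniversal_of_mem_UNAax h]
  · rintro φ (h | h)
    exacts [isUniversal_of_mem_ruleEmb isUniversal_embEH h, isUniversal_of_mem_UNAax h]
  · rcases hT with hT | hT
    · exact hT.modelsT_tauEH_of_modelsT_tauEB hF hP (fun _ h => h) hn hw
    · exact hT.modelsT_tauEH_of_modelsT_tauEB hF hP
        (fun _ => modelsT_tauEB_of_modelsT_tauEH hP) hn hw

theorem expEquivSel_tauHPv_tauEBv (hF : ∀ f, f ∈ progFuncs P) (hg : goodSig P) :
    ExpEquivSel X ogOf (tauHPv P) (tauEBv P) := by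
  refine expEquivSel_ogOf_of_forall_varsNamed hg ?_ ?_ fun T _ w hn =>
    modelsT_tauHPv_iff_modelsT_tauEBv hF hn
  · rintro φ ((h | h) | h)
    exacts [isUniversal_of_mem_ruleEmb isUniversal_embHP h, isUniversal_of_mem_PIAax h,
      isUniversal_of_mem_UNAax h]
  · rintro φ ((h | h) | h)
    exacts [isUniversal_of_mem_ruleEmb isUniversal_embEB h, isUniversal_of_mem_PIAax h,
      isUniversal_of_mem_UNAax h]

end Embeddings

theorem stmt6_general {S : Sig} (X : Sem) (P : Program S) (hF : ∀ f : S.Func, f ∈ progFuncs P)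
    (hg : goodSig P) :
    (progNormal P → ExpEquivSel X ogOf (tauEB P) (tauEH P)) ∧
      ExpEquivSel X ogOf (tauHPv P) (tauEBv P) :=
  ⟨expEquivSel_tauEB_tauEH hF hg, expEquivSel_tauHPv_tauEBv hF hg⟩

/-- For every normal program `P`, `τ_EB(P) ≡ˣ_og τ_EH(P)`;
for every disjunctive program `P`, `τ^∨_HP(P) ≡ˣ_og τ^∨_EB(P)`. -/
theorem stmt6 {S : Sig} (X : Sem) :
    (∀ P : Program S, progWf P → progNormal P → fullSig P → goodSig P →
        ExpEquivSel X ogOf (tauEB P) (tauEH P)) ∧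
    (∀ P : Program S, progWf P → fullSig P → goodSig P →
        ExpEquivSel X ogOf (tauHPv P) (tauEBv P)) :=
  ⟨fun P _ hP hs hg => (stmt6_general X P hs.1 hg).1 hP,
    fun P _ hs hg => (stmt6_general X P hs.1 hg).2⟩
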